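/- arXiv:1112.3255 — 2 statements merged into one kernel-verified Lean document; each statement's English description precedes it below -/
import Mathlib

section
/- Let W be a finite reflection group with root system Φ, a a generic point, Φ⁺ = {α ∈ Φ : ⟨a,α⟩ > 0}, and Δ a simple system for Φ⁺. Then W is generated by the set of simple reflections S = {s_α : α ∈ Δ}. -/
/-!
As `W` is generated by the reflections along the roots and `s_{-β} = s_β`, it is enough to treat
the reflection along a positive root `β`, by induction on `⟪a, β⟫`, which takes finitely many
values.

A positive root `β` is a nonnegative combination of simple roots and `⟪β, β⟫ > 0`, so some simple
`α` has `⟪β, α⟫ > 0`, whence `⟪a, s_α β⟫ < ⟪a, β⟫`. If `β ≠ α`, then `s_α β` is again positive: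
otherwise `β` and `-s_α β` would both lie in the cone spanned by `Δ`, and their sum would be a
multiple of `α`; as `Δ` is linearly independent, `α` spans an extremal ray of that cone, so `β`
would be a multiple of `α`. Finally `s_{s_α β} = s_α s_β s_α⁻¹`.
-/

open scoped RealInnerProductSpace

variable {V : Type*} [NormedAddCommGroup V] [InnerProductSpace ℝ V]

/-- `s` acts as the orthogonal reflection along the nonzero vector `α`:
`s v = v - 2 (⟪v,α⟫/⟪α,α⟫) α`. -/
def IsReflAlong (s : V ≃ₗᵢ[ℝ] V) (α : V) : Prop :=
  α ≠ 0 ∧ ∀ v : V, s v = v - ((2 * ⟪v, α⟫ / ⟪α, α⟫) • α)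

/-- `s` is a reflection. -/
def IsReflection (s : V ≃ₗᵢ[ℝ] V) : Prop :=
  ∃ α : V, IsReflAlong s α

/-- A reflection group: a subgroup of the group of linear isometries of `V` generated by
the reflections it contains. -/
def IsReflectionGroup (W : Subgroup (V ≃ₗᵢ[ℝ] V)) : Prop :=
  W = Subgroup.closure {s | IsReflection s ∧ s ∈ W}

/-- `a` is a generic point for `W`: it is fixed by no reflection belonging to `W`. -/
def IsGeneric (W : Subgroup (V ≃ₗᵢ[ℝ] V)) (a : V) : Prop :=
  ∀ s ∈ W, IsReflection s → s a ≠ a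

/-- The `W`-orbit of the point `a`. -/
def orbitSet (W : Subgroup (V ≃ₗᵢ[ℝ] V)) (a : V) : Set V :=
  {x | ∃ w ∈ W, x = w a}

/-- The permutahedron `Perm^a(W)`: the convex hull of the `W`-orbit of `a`. -/
noncomputable def permutahedron (W : Subgroup (V ≃ₗᵢ[ℝ] V)) (a : V) : Set V :=
  convexHull ℝ (orbitSet W a)

/-- A root system for `W`. -/
structure IsRootSystem (W : Subgroup (V ≃ₗᵢ[ℝ] V)) (Φ : Set V) : Prop where
  finite : Φ.Finite
  nonempty : Φ.Nonempty
  ne_zero : ∀ α ∈ Φ, α ≠ 0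
  gen : W = Subgroup.closure {s | ∃ α ∈ Φ, IsReflAlong s α}
  line : ∀ α ∈ Φ, {β ∈ Φ | ∃ t : ℝ, β = t • α} = {α, -α}
  stable : ∀ w ∈ W, (⇑w) '' Φ = Φ

/-- The positive system determined by the generic point `a`: roots `α` with `⟪a, α⟫ > 0`. -/
def posSystem (a : V) (Φ : Set V) : Set V :=
  {α ∈ Φ | 0 < ⟪a, α⟫}

/-- `Δ` is a simple system for the positive system `Φp`: `Δ ⊆ Φp` is linearly independent and
every element of `Φp` is a linear combination of `Δ` with nonnegative coefficients. -/
def IsSimpleSystem (Φp Δ : Set V) : Prop :=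
  Δ ⊆ Φp ∧ LinearIndependent ℝ ((↑) : Δ → V) ∧
    ∀ β ∈ Φp, ∃ c : V →₀ ℝ, (c.support : Set V) ⊆ Δ ∧ (∀ v : V, 0 ≤ c v) ∧
      β = c.sum fun v r => r • v

/-- The subgroup generated by the reflections along the vectors of `I`. -/
def genSubgroup (I : Set V) : Subgroup (V ≃ₗᵢ[ℝ] V) :=
  Subgroup.closure {s | ∃ β ∈ I, IsReflAlong s β}

namespace IsReflAlong

variable {r s t w : V ≃ₗᵢ[ℝ] V} {α β : V}

lemma eq (hs : IsReflAlong s α) (ht : IsReflAlong t α) : s = t := by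
  ext v
  rw [hs.2, ht.2]

lemma neg (hs : IsReflAlong s α) : IsReflAlong s (-α) := by
  refine ⟨neg_ne_zero.2 hs.1, fun v => ?_⟩
  rw [hs.2 v, inner_neg_right, inner_neg_neg, mul_neg, neg_div, neg_smul_neg]

lemma apply_eq_self_of_inner_eq_zero (hs : IsReflAlong s α) {v : V} (hv : ⟪v, α⟫ = 0) :
    s v = v := by
  rw [hs.2, hv, mul_zero, zero_div, zero_smul, sub_zero]

lemma inner_apply_lt (hs : IsReflAlong s α) {a : V} (ha : 0 < ⟪a, α⟫) (hβ : 0 < ⟪β, α⟫) :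
    ⟪a, s β⟫ < ⟪a, β⟫ := by
  have hα : 0 < ⟪α, α⟫ := real_inner_self_pos.2 hs.1
  rw [hs.2, inner_sub_right, real_inner_smul_right, sub_lt_self_iff]
  positivity

lemma conj (hs : IsReflAlong s α) (w : V ≃ₗᵢ[ℝ] V) : IsReflAlong (w * s * w⁻¹) (w α) := by
  refine ⟨w.map_eq_zero_iff.not.2 hs.1, fun v => ?_⟩
  obtain ⟨u, rfl⟩ := w.surjective v
  have hconj : (w * s * w⁻¹) (w u) = w (s u) := congrArg (fun x => w (s x)) (w.symm_apply_apply u)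
  rw [hconj, hs.2, map_sub, map_smul, w.inner_map_map, w.inner_map_map]

lemma mem_of_isReflAlong_apply {H : Subgroup (V ≃ₗᵢ[ℝ] V)} (hr : IsReflAlong r β) (hw : w ∈ H)
    (ht : IsReflAlong t (w β)) (htH : t ∈ H) : r ∈ H := by
  rwa [ht.eq (hr.conj w), H.mul_mem_cancel_right (H.inv_mem hw), H.mul_mem_cancel_left hw] at htH

lemma mem_genSubgroup {I : Set V} (hs : IsReflAlong s α) (hα : α ∈ I) : s ∈ genSubgroup I :=
  Subgroup.subset_closure ⟨α, hα, hs⟩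

end IsReflAlong

lemma isReflAlong_reflection {α : V} (hα : α ≠ 0) : IsReflAlong (ℝ ∙ α)ᗮ.reflection α := by
  refine ⟨hα, fun v => ?_⟩
  rw [Submodule.reflection_orthogonal_apply, Submodule.reflection_singleton_apply, neg_sub,
    real_inner_comm, real_inner_self_eq_norm_sq, mul_div_assoc, mul_smul, ofNat_smul_eq_nsmul ℝ]
  rfl

lemma genSubgroup_le_iff {I : Set V} {H : Subgroup (V ≃ₗᵢ[ℝ] V)} :
    genSubgroup I ≤ H ↔ ∀ α ∈ I, ∀ s, IsReflAlong s α → s ∈ H := by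
  rw [genSubgroup, Subgroup.closure_le]
  exact ⟨fun h α hα s hs => h ⟨α, hα, hs⟩, fun h s ⟨α, hα, hs⟩ => h α hα s hs⟩

namespace IsRootSystem

variable {W : Subgroup (V ≃ₗᵢ[ℝ] V)} {Φ : Set V} {a α β : V} {s : V ≃ₗᵢ[ℝ] V}

lemma mem_of_isReflAlong (hΦ : IsRootSystem W Φ) (hα : α ∈ Φ) (hs : IsReflAlong s α) : s ∈ W :=
  hΦ.gen ▸ hs.mem_genSubgroup hα

lemma apply_mem (hΦ : IsRootSystem W Φ) (hs : s ∈ W) (hβ : β ∈ Φ) : s β ∈ Φ :=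
  hΦ.stable s hs ▸ Set.mem_image_of_mem s hβ

lemma eq_or_eq_neg_of_eq_smul (hΦ : IsRootSystem W Φ) (hα : α ∈ Φ) (hβ : β ∈ Φ) {t : ℝ}
    (h : β = t • α) : β = α ∨ β = -α :=
  (hΦ.line α hα).subset ⟨hβ, t, h⟩

lemma neg_mem (hΦ : IsRootSystem W Φ) (hα : α ∈ Φ) : -α ∈ Φ :=
  ((hΦ.line α hα).superset (Or.inr rfl)).1

lemma inner_ne_zero (hΦ : IsRootSystem W Φ) (ha : IsGeneric W a) (hα : α ∈ Φ) : ⟪a, α⟫ ≠ 0 := by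
  intro h
  have hs := isReflAlong_reflection (hΦ.ne_zero α hα)
  exact ha _ (hΦ.mem_of_isReflAlong hα hs) ⟨α, hs⟩ (hs.apply_eq_self_of_inner_eq_zero h)

lemma mem_posSystem_or_neg_mem (hΦ : IsRootSystem W Φ) (ha : IsGeneric W a) (hα : α ∈ Φ) :
    α ∈ posSystem a Φ ∨ -α ∈ posSystem a Φ := by
  rcases (hΦ.inner_ne_zero ha hα).lt_or_gt with h | h
  · exact Or.inr ⟨hΦ.neg_mem hα, by rwa [inner_neg_right, neg_pos]⟩
  · exact Or.inl ⟨hα, h⟩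

lemma eq_of_mem_posSystem_of_eq_smul (hΦ : IsRootSystem W Φ) (hα : α ∈ posSystem a Φ)
    (hβ : β ∈ posSystem a Φ) {t : ℝ} (h : β = t • α) : β = α := by
  refine (hΦ.eq_or_eq_neg_of_eq_smul hα.1 hβ.1 h).resolve_right ?_
  rintro rfl
  have hneg := hβ.2
  rw [inner_neg_right, neg_pos] at hneg
  exact hneg.not_gt hα.2

lemma eq_genSubgroup_posSystem (hΦ : IsRootSystem W Φ) (ha : IsGeneric W a) :
    W = genSubgroup (posSystem a Φ) := by
  refine le_antisymm (hΦ.gen.trans_le (genSubgroup_le_iff.2 fun β hβ s hs => ?_))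
    (genSubgroup_le_iff.2 fun β hβ s hs => hΦ.mem_of_isReflAlong hβ.1 hs)
  rcases hΦ.mem_posSystem_or_neg_mem ha hβ with h | h
  · exact hs.mem_genSubgroup h
  · exact hs.neg.mem_genSubgroup h

end IsRootSystem

section LinearIndepOn

variable {R M ι : Type*} [Semiring R] [PartialOrder R] [IsOrderedAddMonoid R]
  [AddCommMonoid M] [Module R M] {v : ι → M} {S : Set ι}

/-- The vectors of a linearly independent family span extremal rays of its cone. -/
lemma eq_single_of_linearCombination_add_linearCombination_eq_smul (hv : LinearIndepOn R v S)
    {c d : ι →₀ R} (hcS : c ∈ Finsupp.supported R R S) (hdS : d ∈ Finsupp.supported R R S)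
    (hc : 0 ≤ c) (hd : 0 ≤ d) {i : ι} (hi : i ∈ S) {k : R}
    (h : Finsupp.linearCombination R v c + Finsupp.linearCombination R v d = k • v i) :
    c = Finsupp.single i (c i) := by
  have hcd : c + d = Finsupp.single i k := by
    refine linearIndepOn_iffₛ.1 hv _ (add_mem hcS hdS) _ (Finsupp.single_mem_supported R k hi) ?_
    rw [map_add, h, Finsupp.linearCombination_single]
  refine Finsupp.ext_iff.2 fun j => ?_
  rcases eq_or_ne j i with rfl | hj
  · rw [Finsupp.single_eq_same]
  · have hle : c j ≤ 0 :=
      calc c j ≤ (c + d) j := le_add_of_nonneg_right (hd j)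
        _ = 0 := by rw [hcd, Finsupp.single_eq_of_ne hj]
    rw [Finsupp.single_eq_of_ne hj]
    exact hle.antisymm (hc j)

end LinearIndepOn

namespace IsSimpleSystem

variable {Φp Δ : Set V} {α β γ : V}

lemma exists_linearCombination_eq (hΔ : IsSimpleSystem Φp Δ) (hβ : β ∈ Φp) :
    ∃ c ∈ Finsupp.supported ℝ ℝ Δ, 0 ≤ c ∧ Finsupp.linearCombination ℝ id c = β := by
  obtain ⟨c, hcΔ, hc, hcβ⟩ := hΔ.2.2 β hβ
  exact ⟨c, hcΔ, hc, hcβ.symm⟩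

lemma exists_inner_pos (hΔ : IsSimpleSystem Φp Δ) (hβ : β ∈ Φp) (hβ0 : β ≠ 0) :
    ∃ α ∈ Δ, 0 < ⟪β, α⟫ := by
  obtain ⟨c, hcΔ, hc, hcβ⟩ := hΔ.exists_linearCombination_eq hβ
  by_contra! hnonpos
  refine (real_inner_self_pos.2 hβ0).not_ge ?_
  calc ⟪β, β⟫ = ∑ α ∈ c.support, c α * ⟪β, α⟫ := by
        nth_rw 2 [← hcβ]
        simp only [Finsupp.linearCombination_apply, Finsupp.sum, inner_sum, real_inner_smul_right,
          id]
    _ ≤ 0 := Finset.sum_nonpos fun α hα =>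
        mul_nonpos_of_nonneg_of_nonpos (hc α) (hnonpos α (hcΔ hα))

lemma exists_eq_smul_of_add_eq_smul (hΔ : IsSimpleSystem Φp Δ) (hα : α ∈ Δ) (hβ : β ∈ Φp)
    (hγ : γ ∈ Φp) {k : ℝ} (h : β + γ = k • α) : ∃ t : ℝ, β = t • α := by
  obtain ⟨c, hcΔ, hc, rfl⟩ := hΔ.exists_linearCombination_eq hβ
  obtain ⟨d, hdΔ, hd, rfl⟩ := hΔ.exists_linearCombination_eq hγ
  have hsingle : c = Finsupp.single α (c α) :=
    eq_single_of_linearCombination_add_linearCombination_eq_smul (v := id) hΔ.2.1 hcΔ hdΔ hc hd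
      hα h
  refine ⟨c α, ?_⟩
  conv_lhs => rw [hsingle, Finsupp.linearCombination_single, id]

variable {W : Subgroup (V ≃ₗᵢ[ℝ] V)} {Φ : Set V} {a : V}

lemma apply_mem_posSystem (hΔ : IsSimpleSystem (posSystem a Φ) Δ) (hΦ : IsRootSystem W Φ)
    (ha : IsGeneric W a) (hα : α ∈ Δ) {s : V ≃ₗᵢ[ℝ] V} (hs : IsReflAlong s α)
    (hβ : β ∈ posSystem a Φ) (hne : β ≠ α) : s β ∈ posSystem a Φ := by
  have hαp : α ∈ posSystem a Φ := hΔ.1 hα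
  have hsβ : s β ∈ Φ := hΦ.apply_mem (hΦ.mem_of_isReflAlong hαp.1 hs) hβ.1
  refine (hΦ.mem_posSystem_or_neg_mem ha hsβ).resolve_right fun hneg => hne ?_
  have hsum : β + -s β = (2 * ⟪β, α⟫ / ⟪α, α⟫) • α := by
    rw [hs.2, ← sub_eq_add_neg, sub_sub_cancel]
  obtain ⟨t, ht⟩ := hΔ.exists_eq_smul_of_add_eq_smul hα hβ hneg hsum
  exact hΦ.eq_of_mem_posSystem_of_eq_smul hαp hβ ht

theorem posSystem_induction (hΔ : IsSimpleSystem (posSystem a Φ) Δ) (hΦ : IsRootSystem W Φ)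
    (ha : IsGeneric W a) {p : V → Prop} (simple : ∀ α ∈ Δ, p α)
    (reflect : ∀ α ∈ Δ, ∀ s, IsReflAlong s α → ∀ β ∈ posSystem a Φ, p (s β) → p β) :
    ∀ β ∈ posSystem a Φ, p β := by
  have hwf : (posSystem a Φ).WellFoundedOn (fun β γ => ⟪a, β⟫ < ⟪a, γ⟫) :=
    (hΦ.finite.subset fun _ hβ => hβ.1).wellFoundedOn (r := Order.Preimage (⟪a, ·⟫) (· < ·))
  intro β hβ
  refine hwf.induction hβ fun β hβ ih => ?_
  obtain ⟨α, hα, hβα⟩ := hΔ.exists_inner_pos hβ (hΦ.ne_zero β hβ.1)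
  rcases eq_or_ne β α with rfl | hne
  · exact simple β hα
  · have hs := isReflAlong_reflection (hΦ.ne_zero α (hΔ.1 hα).1)
    exact reflect α hα _ hs β hβ
      (ih _ (hΔ.apply_mem_posSystem hΦ ha hα hs hβ hne) (hs.inner_apply_lt (hΔ.1 hα).2 hβα))

theorem genSubgroup_eq_genSubgroup_posSystem (hΔ : IsSimpleSystem (posSystem a Φ) Δ)
    (hΦ : IsRootSystem W Φ) (ha : IsGeneric W a) :
    genSubgroup Δ = genSubgroup (posSystem a Φ) := by
  refine le_antisymm (genSubgroup_le_iff.2 fun α hα s hs => hs.mem_genSubgroup (hΔ.1 hα))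
    (genSubgroup_le_iff.2 (hΔ.posSystem_induction hΦ ha ?_ ?_))
  · exact fun α hα s hs => hs.mem_genSubgroup hα
  · intro α hα s hs β _ hsβ r hr
    have ht := isReflAlong_reflection (hr.conj s).1
    exact hr.mem_of_isReflAlong_apply (hs.mem_genSubgroup hα) ht (hsβ _ ht)

end IsSimpleSystem

theorem generated_by_simple_reflections_general {W : Subgroup (V ≃ₗᵢ[ℝ] V)} {Φ : Set V}
    (hΦ : IsRootSystem W Φ) {a : V} (ha : IsGeneric W a) {Δ : Set V}
    (hΔ : IsSimpleSystem (posSystem a Φ) Δ) : W = genSubgroup Δ :=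
  calc W = genSubgroup (posSystem a Φ) := hΦ.eq_genSubgroup_posSystem ha
    _ = genSubgroup Δ := (hΔ.genSubgroup_eq_genSubgroup_posSystem hΦ ha).symm

/-- `W` is generated by the simple reflections `{s_α : α ∈ Δ}`. -/
theorem generated_by_simple_reflections [FiniteDimensional ℝ V]
    (W : Subgroup (V ≃ₗᵢ[ℝ] V)) (hWfin : (W : Set (V ≃ₗᵢ[ℝ] V)).Finite)
    (Φ : Set V) (hΦ : IsRootSystem W Φ) (a : V) (ha : IsGeneric W a)
    (Δ : Set V) (hΔ : IsSimpleSystem (posSystem a Φ) Δ) :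
    W = Subgroup.closure {s : V ≃ₗᵢ[ℝ] V | ∃ α ∈ Δ, IsReflAlong s α} :=
  generated_by_simple_reflections_general hΦ ha hΔ
end

section
/- Let W be a finite reflection group with root system Φ and let a be a generic point for W. Then the affine span of the orbit {w(a) : w ∈ W} is the affine subspace V_a = a + span_ℝ(Φ), i.e. the affine subspace through a with direction the linear span of Φ. In particular the permutahedron Perm^a(W) is full-dimensional in V_a, of dimension dim span_ℝ(Φ). -/
open scoped RealInnerProductSpace

variable {V : Type*} [NormedAddCommGroup V] [InnerProductSpace ℝ V]

/-!
A reflection along `α` moves every vector by a multiple of `α`, so the group generated by the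
reflections along `Φ` preserves every coset of `span Φ`. Conversely, if `a` is not orthogonal to
`α ∈ Φ`, then the reflection along `α` moves `a` by a nonzero multiple of `α`, so `α` is a direction
of the affine span of the orbit.
-/

theorem apply_sub_self_mem_of_mem_closure {R E σ : Type*} [Semiring R]
    [SeminormedAddCommGroup E] [Module R E] [SetLike σ E] [AddSubgroupClass σ E] {p : σ}
    {S : Set (E ≃ₗᵢ[R] E)}
    (hS : ∀ s ∈ S, ∀ v, s v - v ∈ p) {w : E ≃ₗᵢ[R] E} (hw : w ∈ Subgroup.closure S) (v : E) :
    w v - v ∈ p := by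
  induction hw using Subgroup.closure_induction generalizing v with
  | mem s hs => exact hS s hs v
  | one => simp
  | mul x y _ _ hx hy => simpa using add_mem (hx (y v)) (hy v)
  | inv x _ hx =>
    have hxv : x (x⁻¹ v) = v := x.apply_symm_apply v
    simpa [hxv] using neg_mem (hx (x⁻¹ v))

theorem coe_affineSpan_eq_setOf_vsub_mem {k E P : Type*} [Ring k] [AddCommGroup E] [Module k E]
    [AddTorsor E P] {s : Set P} {p : P} (hp : p ∈ s) :
    (affineSpan k s : Set P) = {x | x -ᵥ p ∈ vectorSpan k s} := by
  ext x
  rw [SetLike.mem_coe, Set.mem_ofPred_eq, ← direction_affineSpan,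
    AffineSubspace.vsub_right_mem_direction_iff_mem (mem_affineSpan k hp)]

theorem vectorSpan_convexHull {k E : Type*} [Field k] [LinearOrder k] [IsStrictOrderedRing k]
    [AddCommGroup E] [Module k E] (s : Set E) :
    vectorSpan k (convexHull k s) = vectorSpan k s := by
  rw [← direction_affineSpan, affineSpan_convexHull, direction_affineSpan]

theorem exists_isReflAlong {α : V} (hα : α ≠ 0) : ∃ s : V ≃ₗᵢ[ℝ] V, IsReflAlong s α := by
  refine ⟨(ℝ ∙ α)ᗮ.reflection, hα, fun v => ?_⟩
  rw [Submodule.reflection_orthogonal_apply, Submodule.reflection_singleton_apply,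
    real_inner_self_eq_norm_sq, real_inner_comm, RCLike.ofReal_real_eq_id, id]
  module

namespace IsReflAlong

variable {s : V ≃ₗᵢ[ℝ] V} {α v : V}

theorem apply_sub_self (hs : IsReflAlong s α) (v : V) :
    s v - v = -(2 * ⟪v, α⟫ / ⟪α, α⟫) • α := by
  rw [hs.2, sub_sub_cancel_left, neg_smul]

theorem apply_eq_self (hs : IsReflAlong s α) (hv : ⟪v, α⟫ = 0) : s v = v := by
  rw [hs.2, hv, mul_zero, zero_div, zero_smul, sub_zero]

theorem mem_of_apply_sub_self_mem (hs : IsReflAlong s α) (hv : ⟪v, α⟫ ≠ 0) {p : Submodule ℝ V}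
    (h : s v - v ∈ p) : α ∈ p := by
  have hcoeff : -(2 * ⟪v, α⟫ / ⟪α, α⟫) ≠ 0 :=
    neg_ne_zero.2 (div_ne_zero (mul_ne_zero two_ne_zero hv) (inner_self_ne_zero.2 hs.1))
  rwa [hs.apply_sub_self, p.smul_mem_iff hcoeff] at h

end IsReflAlong

theorem mem_orbitSet_self (W : Subgroup (V ≃ₗᵢ[ℝ] V)) (a : V) : a ∈ orbitSet W a :=
  ⟨1, W.one_mem, rfl⟩

theorem mem_genSubgroup {Φ : Set V} {α : V} {s : V ≃ₗᵢ[ℝ] V} (hα : α ∈ Φ) (hs : IsReflAlong s α) :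
    s ∈ genSubgroup Φ :=
  Subgroup.subset_closure ⟨α, hα, hs⟩

theorem apply_sub_self_mem_span_of_mem_genSubgroup {Φ : Set V} {w : V ≃ₗᵢ[ℝ] V}
    (hw : w ∈ genSubgroup Φ) (v : V) : w v - v ∈ Submodule.span ℝ Φ := by
  refine apply_sub_self_mem_of_mem_closure ?_ hw v
  rintro s ⟨α, hα, hs⟩ v
  rw [hs.apply_sub_self]
  exact Submodule.smul_mem _ _ (Submodule.subset_span hα)

theorem vectorSpan_orbitSet_genSubgroup_le (Φ : Set V) (a : V) :
    vectorSpan ℝ (orbitSet (genSubgroup Φ) a) ≤ Submodule.span ℝ Φ := by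
  rw [vectorSpan_eq_span_vsub_set_right ℝ (mem_orbitSet_self _ a), Submodule.span_le]
  rintro _ ⟨_, ⟨w, hw, rfl⟩, rfl⟩
  exact apply_sub_self_mem_span_of_mem_genSubgroup hw a

theorem vectorSpan_orbitSet_genSubgroup {Φ : Set V} {a : V} (ha : ∀ α ∈ Φ, ⟪a, α⟫ ≠ 0) :
    vectorSpan ℝ (orbitSet (genSubgroup Φ) a) = Submodule.span ℝ Φ := by
  refine (vectorSpan_orbitSet_genSubgroup_le Φ a).antisymm (Submodule.span_le.2 fun α hα => ?_)
  have hα0 : α ≠ 0 := fun h => ha α hα (h ▸ inner_zero_right a)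
  obtain ⟨s, hs⟩ := exists_isReflAlong hα0
  have hsa : s a - a ∈ vectorSpan ℝ (orbitSet (genSubgroup Φ) a) :=
    vsub_mem_vectorSpan ℝ ⟨s, mem_genSubgroup hα hs, rfl⟩ (mem_orbitSet_self _ a)
  exact hs.mem_of_apply_sub_self_mem (ha α hα) hsa

theorem IsRootSystem.inner_ne_zero_s9 {W : Subgroup (V ≃ₗᵢ[ℝ] V)} {Φ : Set V} {a α : V}
    (hΦ : IsRootSystem W Φ) (ha : IsGeneric W a) (hα : α ∈ Φ) : ⟪a, α⟫ ≠ 0 := by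
  obtain ⟨s, hs⟩ := exists_isReflAlong (hΦ.ne_zero α hα)
  have hsW : s ∈ W := hΦ.gen ▸ mem_genSubgroup hα hs
  exact fun h => ha s hsW ⟨α, hs⟩ (hs.apply_eq_self h)

theorem affineSpan_orbit_eq_general (Φ : Set V) (a : V) (ha : ∀ α ∈ Φ, ⟪a, α⟫ ≠ 0) :
    (affineSpan ℝ (orbitSet (genSubgroup Φ) a) : Set V) = {x : V | x - a ∈ Submodule.span ℝ Φ} ∧
    vectorSpan ℝ (permutahedron (genSubgroup Φ) a) = Submodule.span ℝ Φ := by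
  have hspan := vectorSpan_orbitSet_genSubgroup ha
  constructor
  · rw [coe_affineSpan_eq_setOf_vsub_mem (mem_orbitSet_self _ a), hspan]
    simp only [vsub_eq_sub]
  · rw [permutahedron, vectorSpan_convexHull, hspan]

/-- the affine span of the orbit of a generic point is `a + span ℝ Φ`;
in particular the permutahedron is full-dimensional there, of dimension `dim span ℝ Φ`. -/
theorem affineSpan_orbit_eq [FiniteDimensional ℝ V]
    (W : Subgroup (V ≃ₗᵢ[ℝ] V)) (hWfin : (W : Set (V ≃ₗᵢ[ℝ] V)).Finite)
    (Φ : Set V) (hΦ : IsRootSystem W Φ) (a : V) (ha : IsGeneric W a) :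
    (affineSpan ℝ (orbitSet W a) : Set V) = {x : V | x - a ∈ Submodule.span ℝ Φ} ∧
    Module.finrank ℝ (vectorSpan ℝ (permutahedron W a)) =
      Module.finrank ℝ (Submodule.span ℝ Φ) := by
  obtain rfl : W = genSubgroup Φ := hΦ.gen
  exact (affineSpan_orbit_eq_general Φ a fun _ => hΦ.inner_ne_zero_s9 ha).imp_right fun h => by rw [h]
end
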